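/- Let N ≥ 1 be an integer and let m_{ij} ∈ ℝ for 1 ≤ i, j ≤ N+1 with m_{ij} = m_{ji}. Let ℒ_N be the 2(N+1)×2(N+1) real matrix composed of 2×2 blocks (A_{ij})_{1≤i,j≤N+1} where A_{ii} is the matrix with rows (1,0), (m_{ii}, N+1), and for i ≠ j, A_{ij} is the matrix with rows (0,0), (m_{ij}, 0). Then ℒ_N is invertible and ℒ_Nᵀ P₋ ℒ_N = P₊; equivalently, ℒ_N is bijective and ⟨P₋ℒ_N x, ℒ_N y⟩ = ⟨P₊x, y⟩ for all x, y ∈ ℂ^{2(N+1)} (a (𝒥₊,𝒥₋)-unitary operator). -/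

import Mathlib

open Matrix

/-- The standard Hermitian inner product on `ℂ^n`, conjugate-linear in the
second argument. -/
noncomputable def herm {n : Type*} [Fintype n] (x y : n → ℂ) : ℂ :=
  ∑ i, x i * (starRingEnd ℂ) (y i)

/-- `P₀`: the 2×2 matrix with rows `(0,1)`, `(−1,0)`, over `ℂ`. -/
def P0mat : Matrix (Fin 2) (Fin 2) ℂ := !![0, 1; -1, 0]

/-- The 2×2 block `A_{ij}` of the matrix `ℒ_N` of Example 5.8: `A_{ii}` has rows
`(1,0)`, `(m_{ii}, N+1)` and, for `i ≠ j`, `A_{ij}` has rows `(0,0)`, `(m_{ij}, 0)`. -/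
noncomputable def deltaBlock (N : ℕ) (m : Fin (N + 1) → Fin (N + 1) → ℝ)
    (i j : Fin (N + 1)) : Matrix (Fin 2) (Fin 2) ℂ :=
  if i = j then !![1, 0; (m i i : ℂ), ((N : ℂ) + 1)] else !![0, 0; (m i j : ℂ), 0]

/-! Regrouped by the `Fin 2` coordinate instead of by the vertex index, `ℒ` is the 2×2 matrix
`[1, 0; M, c]` and `P₊` is `[0, 1; -1, 0]`, with entries in the ring of matrices. Multiplying out,
`ℒᵀ P₊ ℒ = [M - Mᵀ, c; -c, 0]`, which is `c P₊` exactly when `M` is symmetric. Invertibility of `ℒ`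
follows from that of `P₊`, and since `ℒ` is real, the transpose identity is also the identity of
Hermitian forms. -/

section StandardSymplectic

variable (ι R : Type*) [Fintype ι] [DecidableEq ι] [CommRing R]

/-- The matrix `P₊` of the standard symplectic form on `R^ι × R^ι`, with the two factors indexed by
`Fin 2`; as a 2×2 matrix of `ι × ι` blocks it is `[0, 1; -1, 0]`. -/
def standardSymplectic : Matrix (Fin 2 × ι) (Fin 2 × ι) R :=
  compRingEquiv (Fin 2) ι R !![0, 1; -1, 0]

theorem standardSymplectic_mul_self :
    standardSymplectic ι R * standardSymplectic ι R = -1 := by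
  have blocks : !![0, 1; -1, 0] * !![0, 1; -1, 0] =
      (-1 : Matrix (Fin 2) (Fin 2) (Matrix ι ι R)) := by
    simp [one_fin_two]
  rw [standardSymplectic, ← map_mul, blocks, map_neg, map_one]

theorem isUnit_standardSymplectic : IsUnit (standardSymplectic ι R) :=
  .of_mul_eq_one (-standardSymplectic ι R) <| by
    rw [mul_neg, standardSymplectic_mul_self, neg_neg]

theorem blockDiagonal_P0mat :
    (blockDiagonal fun _ : ι => P0mat) = standardSymplectic ι ℂ := by
  ext ⟨a, i⟩ ⟨b, j⟩
  by_cases hij : i = j <;> fin_cases a <;> fin_cases b <;>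
    simp [blockDiagonal_apply, P0mat, standardSymplectic, hij]

end StandardSymplectic

section DeltaCoupling

variable {ι R : Type*} [Fintype ι] [DecidableEq ι] [CommRing R]

/-- The vertex coupling matrix `ℒ` of a `δ`-type interaction with strengths `M` and scaling `c`,
acting by `(u, v) ↦ (u, M u + c v)`; the paper's `ℒ_N` has `c = N + 1`. -/
def deltaCoupling (M : Matrix ι ι R) (c : R) : Matrix (Fin 2 × ι) (Fin 2 × ι) R :=
  compRingEquiv (Fin 2) ι R !![1, 0; M, c • 1]

theorem transpose_deltaCoupling (M : Matrix ι ι R) (c : R) :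
    (deltaCoupling M c)ᵀ = compRingEquiv (Fin 2) ι R !![1, Mᵀ; 0, c • 1] := by
  rw [deltaCoupling, compRingEquiv_apply, transpose_comp, compRingEquiv_apply]
  congr 1
  ext a b : 1
  fin_cases a <;> fin_cases b <;> simp

theorem conjTranspose_deltaCoupling [StarRing R] {M : Matrix ι ι R} {c : R}
    (hM : M.map star = M) (hc : star c = c) :
    (deltaCoupling M c)ᴴ = (deltaCoupling M c)ᵀ := by
  have entries_real : (deltaCoupling M c).map star = deltaCoupling M c := by
    ext ⟨a, i⟩ ⟨b, j⟩
    have M_real (i j : ι) : star (M i j) = M i j := congrFun₂ hM i j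
    by_cases hij : i = j <;> fin_cases a <;> fin_cases b <;>
      simp [deltaCoupling, M_real, hc, hij]
  rw [conjTranspose, transpose_map, entries_real]

theorem transpose_deltaCoupling_mul_standardSymplectic_mul (M : Matrix ι ι R) (c : R) :
    (deltaCoupling M c)ᵀ * standardSymplectic ι R * deltaCoupling M c =
      compRingEquiv (Fin 2) ι R !![M - Mᵀ, c • 1; -(c • 1), 0] := by
  have blocks : !![1, Mᵀ; 0, c • 1] * !![0, 1; -1, 0] * !![1, 0; M, c • 1] =
      !![M - Mᵀ, c • 1; -(c • 1), 0] := by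
    simp [neg_add_eq_sub]
  rw [transpose_deltaCoupling, standardSymplectic, deltaCoupling, ← map_mul, ← map_mul, blocks]

theorem transpose_deltaCoupling_mul_standardSymplectic_mul_of_isSymm {M : Matrix ι ι R}
    (hM : M.IsSymm) (c : R) :
    (deltaCoupling M c)ᵀ * standardSymplectic ι R * deltaCoupling M c =
      c • standardSymplectic ι R := by
  have blocks : !![M - Mᵀ, c • 1; -(c • 1), 0] = c • !![0, 1; -1, 0] := by
    simp [hM.eq]
  rw [transpose_deltaCoupling_mul_standardSymplectic_mul, blocks]
  rfl

theorem deltaBlock_eq_deltaCoupling (N : ℕ) (m : Fin (N + 1) → Fin (N + 1) → ℝ) :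
    (fun p q => deltaBlock N m p.2 q.2 p.1 q.1) =
      deltaCoupling ((of m).map Complex.ofReal) ((N : ℂ) + 1) := by
  ext ⟨a, i⟩ ⟨b, j⟩
  by_cases hij : i = j <;> fin_cases a <;> fin_cases b <;>
    simp [deltaBlock, deltaCoupling, hij]

end DeltaCoupling

theorem mulVec_mulVec_dotProduct_star_mulVec {m n R : Type*} [Fintype m] [Fintype n]
    [CommSemiring R] [StarRing R] (A : Matrix m m R) (L : Matrix m n R) (x y : n → R) :
    A *ᵥ (L *ᵥ x) ⬝ᵥ star (L *ᵥ y) = (Lᴴ * A * L) *ᵥ x ⬝ᵥ star y := by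
  rw [star_mulVec, dotProduct_comm, ← dotProduct_mulVec, dotProduct_comm]
  simp only [mulVec_mulVec, Matrix.mul_assoc]

theorem deltaN_unitary_general {ι R : Type*} [Fintype ι] [DecidableEq ι] [CommRing R] [StarRing R]
    {M : Matrix ι ι R} (hM : M.IsSymm) (hM_real : M.map star = M)
    {c d : R} (hc_real : star c = c) (hdc : d * c = 1) :
    IsUnit (deltaCoupling M c) ∧
      (deltaCoupling M c)ᵀ * (d • standardSymplectic ι R) * deltaCoupling M c =
        standardSymplectic ι R ∧
      Function.Bijective (deltaCoupling M c).mulVec ∧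
      ∀ x y : Fin 2 × ι → R,
        (d • standardSymplectic ι R) *ᵥ (deltaCoupling M c *ᵥ x) ⬝ᵥ
            star (deltaCoupling M c *ᵥ y) =
          standardSymplectic ι R *ᵥ x ⬝ᵥ star y := by
  have form_eq : (deltaCoupling M c)ᵀ * (d • standardSymplectic ι R) * deltaCoupling M c =
      standardSymplectic ι R := by
    rw [Matrix.mul_smul, Matrix.smul_mul,
      transpose_deltaCoupling_mul_standardSymplectic_mul_of_isSymm hM, smul_smul, hdc, one_smul]
  have isUnit : IsUnit (deltaCoupling M c) :=
    isUnit_of_mul_isUnit_right (form_eq ▸ isUnit_standardSymplectic ι R)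
  refine ⟨isUnit, form_eq,
    ⟨mulVec_injective_of_isUnit isUnit, mulVec_surjective_iff_isUnit.mpr isUnit⟩, fun x y => ?_⟩
  rw [mulVec_mulVec_dotProduct_star_mulVec, conjTranspose_deltaCoupling hM_real hc_real, form_eq]

/-- Example 5.8: the block matrix `ℒ_N` with blocks `A_{ij}` is invertible and
`(𝒥₊,𝒥₋)`-unitary: `ℒ_Nᵀ P₋ ℒ_N = P₊` where `P₊ = blockdiag(P₀,…,P₀)` and
`P₋ = (1/(N+1)) P₊`. -/
theorem deltaN_unitary (N : ℕ) (hN : 1 ≤ N)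
    (m : Fin (N + 1) → Fin (N + 1) → ℝ) (hm : ∀ i j, m i j = m j i)
    (Pp Pm LN : Matrix (Fin 2 × Fin (N + 1)) (Fin 2 × Fin (N + 1)) ℂ)
    (hPp : Pp = Matrix.blockDiagonal fun _ : Fin (N + 1) => P0mat)
    (hPm : Pm = (((N : ℂ) + 1))⁻¹ • Pp)
    (hLN : LN = fun p q => deltaBlock N m p.2 q.2 p.1 q.1) :
    IsUnit LN ∧ LNᵀ * Pm * LN = Pp ∧
      Function.Bijective LN.mulVec ∧
      ∀ x y : Fin 2 × Fin (N + 1) → ℂ,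
        herm (Pm.mulVec (LN.mulVec x)) (LN.mulVec y) = herm (Pp.mulVec x) y := by
  subst hLN hPm hPp
  rw [blockDiagonal_P0mat, deltaBlock_eq_deltaCoupling]
  exact deltaN_unitary_general (by ext i j; simp [hm i j]) (by ext; simp) (by simp)
    (inv_mul_cancel₀ (Nat.cast_add_one_ne_zero N))
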